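/- All of the following one-sided third derivatives vanish at r = 0: ∂_r³ p₋, ∂_r³ p₊, ∂_r³ ρ₋, ∂_r³ ρ₊, ∂_r³ s₋, ∂_r³ s₊, ∂_r³ (M₋²), ∂_r³ (M₊²), and ∂_r³ q₊. (Second part of Lemma 3.1 of the paper, case j = 3.) -/

import Mathlib

/-!
Call a one-sided jet at the axis even if its odd derivatives vanish; even jets are stable under
smooth composition. Both radial equations have the form `r f' = G w²`. Since `w` is odd, `w²` is
even and vanishes at the axis, so an even jet of `G` of order `m` gives one of `f` of order `m + 1`.
Starting from order zero, this bootstraps the evenness of `p₋` and `1 / M₋²`, hence of the whole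
upstream state.

The downstream quantities are smooth functions of that state, except `M₊²` and `s₊` when `p₊`
vanishes on the axis. In that case `1 / M₋²` is nonincreasing near the axis, so either `p₊`
vanishes identically nearby, where `M₊²` and `s₊` are zero by convention, or it is positive off
the axis, where `M₊²` and `s₊` blow up, and then their one-sided derivatives at the axis
have the junk value `0`.
-/

open Set Filter Asymptotics Topology

section EvenJet

variable {𝕜 E F 𝔸 : Type*} [NontriviallyNormedField 𝕜] [NormedAddCommGroup E] [NormedSpace 𝕜 E]
  [NormedAddCommGroup F] [NormedSpace 𝕜 F] [NormedRing 𝔸] [NormedAlgebra 𝕜 𝔸]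
  {s : Set 𝕜} {a : 𝕜} {m n : ℕ}

/-- `f` has an even Taylor polynomial of order `n` at `a` within `s`: it is `Cⁿ` there and its
derivatives of odd order at most `n` vanish at `a`. -/
def HasEvenJet (n : ℕ) (f : 𝕜 → E) (s : Set 𝕜) (a : 𝕜) : Prop :=
  ContDiffWithinAt 𝕜 n f s a ∧ ∀ k ≤ n, Odd k → iteratedDerivWithin k f s a = 0

namespace HasEvenJet

variable {f : 𝕜 → E} {g : 𝕜 → F}

theorem mono (hf : HasEvenJet n f s a) (hmn : m ≤ n) : HasEvenJet m f s a :=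
  ⟨hf.1.of_le (mod_cast hmn), fun k hk => hf.2 k (hk.trans hmn)⟩

theorem zero (hf : ContDiffWithinAt 𝕜 0 f s a) : HasEvenJet 0 f s a :=
  ⟨mod_cast hf, fun _ hk hodd => absurd (Nat.le_zero.mp hk) hodd.pos.ne'⟩

theorem congr {f₁ : 𝕜 → E} (hf : HasEvenJet n f s a) (h : f₁ =ᶠ[𝓝[s] a] f) (ha : a ∈ s) :
    HasEvenJet n f₁ s a := by
  have h₀ : f₁ a = f a := h.eq_of_nhdsWithin ha
  exact ⟨hf.1.congr_of_eventuallyEq h h₀, fun k hk hodd => by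
    rw [h.iteratedDerivWithin_eq h₀, hf.2 k hk hodd]⟩

theorem prodMk (hf : HasEvenJet n f s a) (hg : HasEvenJet n g s a) (hs : UniqueDiffOn 𝕜 s)
    (ha : a ∈ s) : HasEvenJet n (fun x => (f x, g x)) s a := by
  refine ⟨hf.1.prodMk hg.1, fun k hk hodd => ?_⟩
  rw [iteratedDerivWithin, iteratedFDerivWithin_prodMk hf.1 hg.1 hs ha (mod_cast hk)]
  exact Prod.ext (hf.2 k hk hodd) (hg.2 k hk hodd)

-- In Faà di Bruno's formula, a partition of a set of odd cardinality has a part of odd cardinality.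
theorem comp {φ : E → F} (hφ : ContDiffAt 𝕜 n φ (f a)) (hf : HasEvenJet n f s a)
    (hs : UniqueDiffOn 𝕜 s) (ha : a ∈ s) : HasEvenJet n (φ ∘ f) s a := by
  refine ⟨hφ.comp_contDiffWithinAt a hf.1, fun k hk hodd => ?_⟩
  rw [iteratedDerivWithin_vcomp_eq_sum_orderedFinpartition hφ.contDiffWithinAt hf.1
    uniqueDiffOn_univ hs ha (mapsTo_univ f s) (mod_cast hk)]
  refine Finset.sum_eq_zero fun c _ => ?_
  have sum_partSize : ∑ j, c.partSize j = k := by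
    simpa using Fintype.card_congr c.equivSigma
  obtain ⟨j, hj⟩ : ∃ j, Odd (c.partSize j) := by
    by_contra! heven
    rw [← sum_partSize] at hodd
    exact Nat.not_odd_iff_even.mpr
      (Finset.even_sum _ fun j _ => Nat.not_odd_iff_even.mp (heven j)) hodd
  exact ContinuousMultilinearMap.map_coord_zero _ j
    (hf.2 _ ((c.partSize_le j).trans hk) hj)

theorem mul_self_of_odd {w : 𝕜 → 𝔸} (hw : ContDiffWithinAt 𝕜 n w s a)
    (hodd : ∀ k ≤ n, Even k → iteratedDerivWithin k w s a = 0) (hs : UniqueDiffOn 𝕜 s)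
    (ha : a ∈ s) : HasEvenJet n (w * w) s a := by
  refine ⟨hw.mul hw, fun k hk hk_odd => ?_⟩
  have hwk := hw.of_le (m := k) (mod_cast hk)
  rw [iteratedDerivWithin_mul ha hs hwk hwk]
  refine Finset.sum_eq_zero fun i hi => ?_
  have hik : i ≤ k := Nat.lt_succ_iff.mp (Finset.mem_range.mp hi)
  rcases Nat.even_or_odd i with heven | hi_odd
  · rw [hodd i (hik.trans hk) heven, mul_zero, zero_mul]
  · rw [hodd (k - i) ((k.sub_le i).trans hk) (Nat.Odd.sub_odd hk_odd hi_odd), mul_zero]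

-- One order is gained: the top derivative of `f` only ever multiplies `g a = 0`.
theorem mul_of_apply_eq_zero {f g : 𝕜 → 𝔸} (hf : HasEvenJet n f s a)
    (hf' : ContDiffWithinAt 𝕜 (n + 1 : ℕ) f s a) (hg : HasEvenJet (n + 1) g s a) (hga : g a = 0)
    (hs : UniqueDiffOn 𝕜 s) (ha : a ∈ s) : HasEvenJet (n + 1) (f * g) s a := by
  refine ⟨hf'.mul hg.1, fun k hk hodd => ?_⟩
  have hkn : (k : WithTop ℕ∞) ≤ (n + 1 : ℕ) := mod_cast hk
  rw [iteratedDerivWithin_mul ha hs (hf'.of_le hkn) (hg.1.of_le hkn)]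
  refine Finset.sum_eq_zero fun i hi => ?_
  have hik : i ≤ k := Nat.lt_succ_iff.mp (Finset.mem_range.mp hi)
  rcases Nat.even_or_odd i with heven | hi_odd
  · rw [hg.2 (k - i) ((k.sub_le i).trans hk) (Nat.Odd.sub_even hik hodd heven), mul_zero]
  · rcases hik.eq_or_lt with rfl | hlt
    · rw [Nat.sub_self, iteratedDerivWithin_zero, hga, mul_zero]
    · rw [hf.2 i (by omega) hi_odd, mul_zero, zero_mul]

end HasEvenJet

theorem iteratedDerivWithin_succ_id_smul {f : 𝕜 → E}
    (hf : ContDiffWithinAt 𝕜 (n + 1 : ℕ) f s 0) (hs : UniqueDiffOn 𝕜 s) (h0 : (0 : 𝕜) ∈ s) :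
    iteratedDerivWithin (n + 1) (fun x => x • f x) s 0 =
      (n + 1) • iteratedDerivWithin n f s 0 := by
  rw [show (fun x => x • f x) = (id : 𝕜 → 𝕜) • f from rfl,
    iteratedDerivWithin_smul h0 hs contDiffWithinAt_id hf,
    Finset.sum_eq_single_of_mem 1 (by simp)]
  · simp [iteratedDerivWithin_id h0 hs]
  · intro i _ hi
    simp [iteratedDerivWithin_id h0 hs, hi]

theorem HasEvenJet.of_id_smul_derivWithin [CharZero 𝕜] {f : 𝕜 → E}
    (hf : ContDiffWithinAt 𝕜 (n + 1 : ℕ) f s 0)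
    (h : HasEvenJet n (fun x => x • derivWithin f s x) s 0)
    (hs : UniqueDiffOn 𝕜 s) (h0 : (0 : 𝕜) ∈ s) : HasEvenJet n f s 0 := by
  refine ⟨hf.of_le (mod_cast n.le_succ), fun k hk hodd => ?_⟩
  obtain ⟨j, rfl⟩ := Nat.exists_eq_succ_of_ne_zero hodd.pos.ne'
  have hf' : ContDiffWithinAt 𝕜 (j + 1 : ℕ) (derivWithin f s) s 0 :=
    hf.derivWithin hs (mod_cast Nat.succ_le_succ hk) h0
  have key := h.2 (j + 1) hk hodd
  rw [iteratedDerivWithin_succ_id_smul hf' hs h0, ← iteratedDerivWithin_succ',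
    ← Nat.cast_smul_eq_nsmul 𝕜] at key
  exact (smul_eq_zero.mp key).resolve_left (Nat.cast_ne_zero.mpr j.succ_ne_zero)

theorem HasEvenJet.of_id_smul_derivWithin_eq_mul [CharZero 𝕜] {f g h : 𝕜 → 𝔸}
    (hf : ContDiffWithinAt 𝕜 (n + 2 : ℕ) f s 0) (hg : HasEvenJet n g s 0)
    (hg' : ContDiffWithinAt 𝕜 (n + 1 : ℕ) g s 0) (hh : HasEvenJet (n + 1) h s 0) (hh0 : h 0 = 0)
    (hfgh : ∀ x ∈ s, x • derivWithin f s x = g x * h x)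
    (hs : UniqueDiffOn 𝕜 s) (h0 : (0 : 𝕜) ∈ s) : HasEvenJet (n + 1) f s 0 :=
  .of_id_smul_derivWithin hf
    ((hg.mul_of_apply_eq_zero hg' hh hh0 hs h0).congr (eventually_nhdsWithin_of_forall hfgh) h0)
    hs h0

end EvenJet

section BlowUp

variable {E : Type*} [NormedAddCommGroup E] [NormedSpace ℝ E] {f : ℝ → E} {a b : ℝ} {n : ℕ}

theorem isBigO_one_of_deriv_isBigO_one (hf : ∀ᶠ x in 𝓝[>] a, DifferentiableAt ℝ f x)
    (hf' : deriv f =O[𝓝[>] a] (1 : ℝ → ℝ)) : f =O[𝓝[>] a] (1 : ℝ → ℝ) := by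
  obtain ⟨C, hC⟩ := hf'.bound
  obtain ⟨b, hab : a < b, hb⟩ := mem_nhdsGT_iff_exists_Ioo_subset.mp (hf.and hC)
  obtain ⟨c, hc⟩ := nonempty_Ioo.mpr hab
  have norm_sub_le : ∀ x ∈ Ioo a b, ‖f x - f c‖ ≤ C * ‖x - c‖ := fun x hx =>
    (convex_Ioo a b).norm_image_sub_le_of_norm_deriv_le (fun y hy => (hb hy).1)
      (fun y hy => by simpa using (hb hy).2) hc hx
  have hO : (fun x => f x - f c) =O[𝓝[>] a] fun x => x - c :=
    .of_bound C (mem_of_superset (Ioo_mem_nhdsGT hab) norm_sub_le)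
  have hc' : (fun x => x - c) =O[𝓝[>] a] (1 : ℝ → ℝ) :=
    ((tendsto_id.sub_const c).mono_left nhdsWithin_le_nhds).isBigO_one ℝ
  simpa using (hO.trans hc').add (isBigO_const_one ℝ (f c) (𝓝[>] a))

theorem isBigO_one_of_iteratedDeriv_isBigO_one
    (hf : ∀ᶠ x in 𝓝[>] a, ContDiffAt ℝ n f x)
    (hf' : iteratedDeriv n f =O[𝓝[>] a] (1 : ℝ → ℝ)) : f =O[𝓝[>] a] (1 : ℝ → ℝ) := by
  induction n generalizing f with
  | zero => simpa using hf'
  | succ n ih =>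
    refine isBigO_one_of_deriv_isBigO_one
      (hf.mono fun x hx => hx.differentiableAt (by simp))
      (ih (hf.mono fun x hx => hx.derivWithin (mod_cast le_rfl)) ?_)
    rwa [iteratedDeriv_succ'] at hf'

/-- Differentiability of order `n + 1` fails at `a` here, so the value `0` is the junk value of
the derivative. -/
theorem iteratedDerivWithin_succ_eq_zero_of_tendsto_norm_atTop (hab : a < b)
    (hf : ∀ᶠ x in 𝓝[>] a, ContDiffAt ℝ n f x)
    (hlim : Tendsto (fun x => ‖f x‖) (𝓝[>] a) atTop) :
    iteratedDerivWithin (n + 1) f (Icc a b) a = 0 := by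
  by_contra hne
  rw [iteratedDerivWithin_succ] at hne
  have hle : 𝓝[>] a ≤ 𝓝[Icc a b] a :=
    nhdsWithin_le_of_mem (mem_of_superset (Ioo_mem_nhdsGT hab) Ioo_subset_Icc_self)
  have hbdd : iteratedDerivWithin n f (Icc a b) =O[𝓝[>] a] (1 : ℝ → ℝ) :=
    ((differentiableWithinAt_of_derivWithin_ne_zero hne).continuousWithinAt.tendsto.mono_left
      hle).isBigO_one ℝ
  have heq : iteratedDerivWithin n f (Icc a b) =ᶠ[𝓝[>] a] iteratedDeriv n f := by
    filter_upwards [hf, Ioo_mem_nhdsGT hab] with x hx hxab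
    exact iteratedDerivWithin_eq_iteratedDeriv (uniqueDiffOn_Icc hab) hx (Ioo_subset_Icc_self hxab)
  have hf_bdd := isBigO_one_of_iteratedDeriv_isBigO_one hf (hbdd.congr' heq .rfl)
  exact not_isBoundedUnder_of_tendsto_atTop hlim ((isBigO_one_iff ℝ).mp hf_bdd)

end BlowUp

theorem eventuallyEq_or_eventually_lt_of_antitoneOn {α β : Type*} [TopologicalSpace α]
    [LinearOrder α] [OrderClosedTopology α] [PartialOrder β] {f : α → β} {a b : α} (hab : a < b)
    (hf : AntitoneOn f (Ico a b)) :
    (∀ᶠ x in 𝓝[≥] a, f x = f a) ∨ ∀ᶠ x in 𝓝[>] a, f x < f a := by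
  have ha : a ∈ Ico a b := left_mem_Ico.mpr hab
  by_cases! h : ∃ c ∈ Ioo a b, f c = f a
  · obtain ⟨c, hc, hfc⟩ := h
    refine .inl (mem_of_superset (Ico_mem_nhdsGE hc.1) fun x hx => ?_)
    have hxb : x ∈ Ico a b := ⟨hx.1, hx.2.trans hc.2⟩
    exact (hf ha hxb hx.1).antisymm (hfc ▸ hf hxb ⟨hc.1.le, hc.2⟩ hx.2.le)
  · exact .inr (mem_of_superset (Ioo_mem_nhdsGT hab) fun x hx =>
      (hf ha ⟨hx.1.le, hx.2⟩ hx.1.le).lt_of_ne (h x hx))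

theorem exists_antitoneOn_Ico_of_derivWithin_nonpos {f : ℝ → ℝ} {a b : ℝ} (hab : a < b)
    (hf : DifferentiableOn ℝ f (Icc a b))
    (hf' : ∀ᶠ x in 𝓝[>] a, derivWithin f (Icc a b) x ≤ 0) :
    ∃ c > a, AntitoneOn f (Ico a c) := by
  obtain ⟨c, hc, hsub⟩ := mem_nhdsGT_iff_exists_Ioo_subset.mp (hf'.and (Ioo_mem_nhdsGT hab))
  have hIco : Ico a c ⊆ Icc a b := by
    rintro x ⟨hax, hxc⟩
    rcases hax.eq_or_lt with rfl | hax
    · exact left_mem_Icc.mpr hab.le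
    · exact Ioo_subset_Icc_self (hsub ⟨hax, hxc⟩).2
  refine ⟨c, hc, antitoneOn_of_deriv_nonpos (convex_Ico a c) (hf.continuousOn.mono hIco)
    (hf.mono (interior_subset.trans hIco)) fun x hx => ?_⟩
  rw [interior_Ico] at hx
  obtain ⟨hder, hxb⟩ := hsub hx
  rwa [derivWithin_of_mem_nhds (Icc_mem_nhds hxb.1 hxb.2)] at hder

/-- The state `(p, ρ, q)` of a polytropic gas: pressure, density and axial speed. -/
abbrev GasState := ℝ × ℝ × ℝ

namespace GasState

variable {γ A cv : ℝ} {u : GasState} {n : WithTop ℕ∞}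

/-- The pressure of a gas state. -/
abbrev p (u : GasState) : ℝ := u.1

/-- The density of a gas state. -/
abbrev ρ (u : GasState) : ℝ := u.2.1

/-- The axial speed of a gas state. -/
abbrev q (u : GasState) : ℝ := u.2.2

/-- The physical states are those with positive pressure, density and speed. -/
structure IsPhysical (u : GasState) : Prop where
  p_pos : 0 < u.p
  ρ_pos : 0 < u.ρ
  q_pos : 0 < u.q

/-- The squared sound speed `c²`. -/
noncomputable def soundSpeedSq (γ : ℝ) (u : GasState) : ℝ := γ * u.p / u.ρ

/-- The squared Mach number `M²`. -/
noncomputable def machSq (γ : ℝ) (u : GasState) : ℝ := u.ρ * u.q ^ 2 / (γ * u.p)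

/-- The entropy `s`, normalised by `p = A ρ^γ exp (s / cv)`. -/
noncomputable def entropy (γ A cv : ℝ) (u : GasState) : ℝ :=
  cv * Real.log (u.p / (A * u.ρ ^ γ))

/-- The gas constant `μ²` of the Rankine–Hugoniot relations. -/
noncomputable def muSq (γ : ℝ) : ℝ := (γ - 1) / (γ + 1)

/-- The pressure `p₊` behind a stationary shock with upstream state `u`. -/
noncomputable def postShockPressure (γ : ℝ) (u : GasState) : ℝ :=
  ((1 + muSq γ) * machSq γ u - muSq γ) * u.p

/-- The axial speed `q₊` behind a stationary shock with upstream state `u`. -/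
noncomputable def postShockSpeed (γ : ℝ) (u : GasState) : ℝ :=
  muSq γ * (u.q + (2 / (γ - 1)) * soundSpeedSq γ u / u.q)

/-- The Rankine–Hugoniot state `(p₊, ρ₊, q₊)` behind a stationary shock with upstream state `u`;
its pressure is not positive if the upstream Mach number is too small. -/
noncomputable def postShock (γ : ℝ) (u : GasState) : GasState :=
  (postShockPressure γ u, u.ρ * u.q / postShockSpeed γ u, postShockSpeed γ u)

/-- The factor through which `M²` drives the radial equation for `1 / M²`. -/
noncomputable def machForcing (γ : ℝ) (u : GasState) : ℝ :=
  (γ + 1) ^ 2 / (γ - 1 + 2 / machSq γ u) - (γ - 1 + 2 / machSq γ u)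

theorem muSq_pos (hγ : 1 < γ) : 0 < muSq γ := div_pos (by linarith) (by linarith)

namespace IsPhysical

theorem soundSpeedSq_pos (hu : u.IsPhysical) (hγ : 0 < γ) : 0 < soundSpeedSq γ u :=
  div_pos (mul_pos hγ hu.p_pos) hu.ρ_pos

theorem machSq_pos (hu : u.IsPhysical) (hγ : 0 < γ) : 0 < machSq γ u :=
  div_pos (mul_pos hu.ρ_pos (pow_pos hu.q_pos 2)) (mul_pos hγ hu.p_pos)

theorem postShockSpeed_pos (hu : u.IsPhysical) (hγ : 1 < γ) : 0 < postShockSpeed γ u := by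
  have hc := hu.soundSpeedSq_pos (zero_lt_one.trans hγ)
  exact mul_pos (muSq_pos hγ) (add_pos hu.q_pos
    (div_pos (mul_pos (div_pos two_pos (sub_pos.mpr hγ)) hc) hu.q_pos))

theorem postShock_ρ_pos (hu : u.IsPhysical) (hγ : 1 < γ) : 0 < (postShock γ u).ρ :=
  div_pos (mul_pos hu.ρ_pos hu.q_pos) (hu.postShockSpeed_pos hγ)

theorem postShockPressure_eq_mul_sub_inv_machSq (hu : u.IsPhysical) (hγ : 1 < γ) :
    postShockPressure γ u =
      muSq γ * machSq γ u * u.p * (2 * γ / (γ - 1) - 1 / machSq γ u) := by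
  have hM := (hu.machSq_pos (zero_lt_one.trans hγ)).ne'
  have hγ_sub : γ - 1 ≠ 0 := (sub_pos.mpr hγ).ne'
  have hγ_add : γ + 1 ≠ 0 := by linarith
  rw [postShockPressure, muSq]
  field_simp
  ring

end IsPhysical

theorem machForcing_neg_of_inv_machSq_eq (hγ : 1 < γ)
    (h : 1 / machSq γ u = 2 * γ / (γ - 1)) : machForcing γ u < 0 := by
  have hγ_sub : 0 < γ - 1 := sub_pos.mpr hγ
  have key : γ - 1 + 2 / machSq γ u = (γ + 1) ^ 2 / (γ - 1) := by
    rw [← mul_one_div, h]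
    field_simp
    ring
  have : machForcing γ u = -(4 * γ / (γ - 1)) := by
    rw [machForcing, key]
    field_simp
    ring
  rw [this, neg_lt_zero]
  positivity

theorem contDiffAt_machSq (hγ : γ ≠ 0) (hp : u.p ≠ 0) : ContDiffAt ℝ n (machSq γ) u := by
  have := mul_ne_zero hγ hp
  unfold machSq
  fun_prop (disch := assumption)

theorem contDiffAt_entropy (hA : A ≠ 0) (hp : u.p ≠ 0) (hρ : 0 < u.ρ) :
    ContDiffAt ℝ n (entropy γ A cv) u := by
  have hρ' := hρ.ne'
  have hden : A * u.ρ ^ γ ≠ 0 := mul_ne_zero hA (Real.rpow_pos_of_pos hρ γ).ne'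
  have hdiv := div_ne_zero hp hden
  unfold entropy
  fun_prop (disch := assumption)

theorem IsPhysical.contDiffAt_machForcing (hu : u.IsPhysical) (hγ : 1 < γ) :
    ContDiffAt ℝ n (machForcing γ) u := by
  have hγ₀ : 0 < γ := zero_lt_one.trans hγ
  have hM : ContDiffAt ℝ n (machSq γ) u := contDiffAt_machSq hγ₀.ne' hu.p_pos.ne'
  have hM_pos := hu.machSq_pos hγ₀
  have hM_ne := hM_pos.ne'
  have hden : γ - 1 + 2 / machSq γ u ≠ 0 :=
    (add_pos (sub_pos.mpr hγ) (div_pos two_pos hM_pos)).ne'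
  unfold machForcing
  fun_prop (disch := assumption)

theorem IsPhysical.contDiffAt_postShock (hu : u.IsPhysical) (hγ : 1 < γ) :
    ContDiffAt ℝ n (postShock γ) u := by
  have hM : ContDiffAt ℝ n (machSq γ) u :=
    contDiffAt_machSq (zero_lt_one.trans hγ).ne' hu.p_pos.ne'
  have hρ := hu.ρ_pos.ne'
  have hq := hu.q_pos.ne'
  have hspeed : ContDiffAt ℝ n (postShockSpeed γ) u := by
    unfold postShockSpeed soundSpeedSq
    fun_prop (disch := assumption)
  have hspeed_ne := (hu.postShockSpeed_pos hγ).ne'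
  unfold postShock postShockPressure
  fun_prop (disch := assumption)

theorem tendsto_machSq_atTop (hγ : 0 < γ) (hp : u.p = 0) (hρ : 0 < u.ρ) (hq : 0 < u.q) :
    Tendsto (machSq γ) (𝓝[{v | 0 < v.p}] u) atTop := by
  have hnum : Tendsto (fun v : GasState => v.ρ * v.q ^ 2) (𝓝[{v | 0 < v.p}] u)
      (𝓝 (u.ρ * u.q ^ 2)) :=
    (by fun_prop : Continuous fun v : GasState => v.ρ * v.q ^ 2).continuousWithinAt
  have hden : Tendsto (fun v : GasState => γ * v.p) (𝓝[{v | 0 < v.p}] u) (𝓝[>] 0) := by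
    refine tendsto_nhdsWithin_iff.mpr
      ⟨?_, eventually_nhdsWithin_of_forall fun v hv => mul_pos hγ hv⟩
    simpa [hp] using
      (by fun_prop : Continuous fun v : GasState => γ * v.p).continuousWithinAt.tendsto (x := u)
  exact hnum.pos_mul_atTop (by positivity) hden.inv_tendsto_nhdsGT_zero

theorem tendsto_entropy_atBot (hA : 0 < A) (hcv : 0 < cv) (hp : u.p = 0) (hρ : 0 < u.ρ) :
    Tendsto (entropy γ A cv) (𝓝[{v | 0 < v.p}] u) atBot := by
  have hden : A * u.ρ ^ γ ≠ 0 := (mul_pos hA (Real.rpow_pos_of_pos hρ γ)).ne'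
  have hρ' := hρ.ne'
  have hsmooth : ContDiffAt ℝ 0 (fun v : GasState => v.p / (A * v.ρ ^ γ)) u := by
    fun_prop (disch := assumption)
  have hratio : Tendsto (fun v : GasState => v.p / (A * v.ρ ^ γ)) (𝓝[{v | 0 < v.p}] u)
      (𝓝[>] 0) := by
    refine tendsto_nhdsWithin_iff.mpr
      ⟨by simpa [hp] using hsmooth.continuousAt.continuousWithinAt.tendsto, ?_⟩
    have hρ_pos : ∀ᶠ v : GasState in 𝓝 u, 0 < v.ρ :=
      (by fun_prop : ContinuousAt GasState.ρ u).eventually (lt_mem_nhds hρ)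
    filter_upwards [self_mem_nhdsWithin, nhdsWithin_le_nhds hρ_pos] with v hvp hvρ
    exact div_pos hvp (mul_pos hA (Real.rpow_pos_of_pos hvρ γ))
  exact (Real.tendsto_log_nhdsGT_zero.comp hratio).const_mul_atBot hcv

end GasState

section UpstreamFlow

open GasState

/-- A radial upstream flow `u = (p, ρ, q)` with swirl `w` on `[0, r₀]`, of class `Cⁿ⁺¹`, in radial
equilibrium, with `q` even and `w` odd at the axis to order `n`. -/
structure IsUpstreamFlow (n : ℕ) (γ r₀ : ℝ) (u : ℝ → GasState) (w : ℝ → ℝ) : Prop where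
  contDiffOn : ContDiffOn ℝ (n + 1 : ℕ) u (Icc 0 r₀)
  contDiffOn_swirl : ContDiffOn ℝ (n + 1 : ℕ) w (Icc 0 r₀)
  isPhysical : ∀ r ∈ Icc 0 r₀, (u r).IsPhysical
  mul_derivWithin_p : ∀ r ∈ Icc 0 r₀,
    r * derivWithin (fun s => (u s).p) (Icc 0 r₀) r = (u r).ρ * w r ^ 2
  mul_derivWithin_inv_machSq : ∀ r ∈ Icc 0 r₀,
    r * derivWithin (fun s => 1 / machSq γ (u s)) (Icc 0 r₀) r =
      ((γ - 1) * w r ^ 2 / (4 * (u r).q ^ 2)) * machForcing γ (u r)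
  iteratedDerivWithin_q : ∀ k ≤ n, Odd k →
    iteratedDerivWithin k (fun s => (u s).q) (Icc 0 r₀) 0 = 0
  iteratedDerivWithin_swirl : ∀ k ≤ n, Even k → iteratedDerivWithin k w (Icc 0 r₀) 0 = 0

namespace IsUpstreamFlow

variable {n : ℕ} {γ r₀ : ℝ} {u : ℝ → GasState} {w : ℝ → ℝ}

theorem swirl_zero (h : IsUpstreamFlow n γ r₀ u w) : w 0 = 0 := by
  simpa using h.iteratedDerivWithin_swirl 0 n.zero_le Even.zero

theorem contDiffOn_inv_machSq (h : IsUpstreamFlow n γ r₀ u w) (hγ : 1 < γ) :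
    ContDiffOn ℝ (n + 1 : ℕ) (fun r => 1 / machSq γ (u r)) (Icc 0 r₀) := by
  have hγ₀ := zero_lt_one.trans hγ
  intro r hr
  have hu := h.isPhysical r hr
  exact contDiffWithinAt_const.div
    ((contDiffAt_machSq hγ₀.ne' hu.p_pos.ne').comp_contDiffWithinAt r (h.contDiffOn r hr))
    (hu.machSq_pos hγ₀).ne'

theorem hasEvenJet_swirl_mul_self (h : IsUpstreamFlow n γ r₀ u w) (hr₀ : 0 < r₀) :
    HasEvenJet n (w * w) (Icc 0 r₀) 0 :=
  have h0 := left_mem_Icc.mpr hr₀.le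
  .mul_self_of_odd ((h.contDiffOn_swirl 0 h0).of_le (mod_cast n.le_succ))
    h.iteratedDerivWithin_swirl (uniqueDiffOn_Icc hr₀) h0

theorem hasEvenJet_of_hasEvenJet_p_inv_machSq (h : IsUpstreamFlow n γ r₀ u w) (hγ : 1 < γ)
    (hr₀ : 0 < r₀) {m : ℕ} (hm : m ≤ n)
    (hp : HasEvenJet m (fun r => (u r).p) (Icc 0 r₀) 0)
    (hM : HasEvenJet m (fun r => 1 / machSq γ (u r)) (Icc 0 r₀) 0) :
    HasEvenJet m u (Icc 0 r₀) 0 := by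
  have hs := uniqueDiffOn_Icc hr₀
  have h0 := left_mem_Icc.mpr hr₀.le
  have hγ₀ := zero_lt_one.trans hγ
  have hu := h.isPhysical 0 h0
  have hq : HasEvenJet m (fun r => (u r).q) (Icc 0 r₀) 0 :=
    ⟨(h.contDiffOn 0 h0).snd.snd.of_le (mod_cast hm.trans n.le_succ),
      fun k hk => h.iteratedDerivWithin_q k (hk.trans hm)⟩
  let recover : ℝ × ℝ × ℝ → GasState := fun x => (x.1, γ * x.1 / (x.2.1 * x.2.2 ^ 2), x.2.2)
  have hrecover : ContDiffAt ℝ m recover ((u 0).p, 1 / machSq γ (u 0), (u 0).q) := by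
    have : 1 / machSq γ (u 0) * (u 0).q ^ 2 ≠ 0 :=
      (mul_pos (one_div_pos.mpr (hu.machSq_pos hγ₀)) (pow_pos hu.q_pos 2)).ne'
    fun_prop (disch := assumption)
  refine ((hp.prodMk (hM.prodMk hq hs h0) hs h0).comp hrecover hs h0).congr
    (eventually_nhdsWithin_of_forall fun r hr => ?_) h0
  have hp_pos := (h.isPhysical r hr).p_pos
  have hρ_pos := (h.isPhysical r hr).ρ_pos
  have hq_pos := (h.isPhysical r hr).q_pos
  refine Prod.ext rfl (Prod.ext ?_ rfl)
  simp only [recover, Function.comp_apply, machSq]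
  field_simp

theorem hasEvenJet_succ (h : IsUpstreamFlow n γ r₀ u w) (hγ : 1 < γ) (hr₀ : 0 < r₀) {m : ℕ}
    (hm : m + 1 ≤ n) (hu : HasEvenJet m u (Icc 0 r₀) 0) :
    HasEvenJet (m + 1) u (Icc 0 r₀) 0 := by
  have hs := uniqueDiffOn_Icc hr₀
  have h0 := left_mem_Icc.mpr hr₀.le
  have hphys := h.isPhysical 0 h0
  have hw := (h.hasEvenJet_swirl_mul_self hr₀).mono hm
  have hw0 : (w * w) 0 = 0 := by simp [h.swirl_zero]
  have hle : ((m + 2 : ℕ) : WithTop ℕ∞) ≤ (n + 1 : ℕ) := mod_cast Nat.succ_le_succ hm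
  have hle' : ((m + 1 : ℕ) : WithTop ℕ∞) ≤ (n + 1 : ℕ) := mod_cast hm.trans n.le_succ
  have hu_cont := (h.contDiffOn 0 h0).of_le hle'
  have hrate : ∀ j : ℕ, ContDiffAt ℝ j
      (fun v : GasState => (γ - 1) / (4 * v.q ^ 2) * machForcing γ v) (u 0) := fun j => by
    have := hphys.contDiffAt_machForcing (n := j) hγ
    have : 4 * (u 0).q ^ 2 ≠ 0 := by simpa using hphys.q_pos.ne'
    fun_prop (disch := assumption)
  refine h.hasEvenJet_of_hasEvenJet_p_inv_machSq hγ hr₀ hm ?_ ?_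
  · refine .of_id_smul_derivWithin_eq_mul ((h.contDiffOn 0 h0).fst.of_le hle)
      (.comp (by fun_prop : ContDiffAt ℝ m GasState.ρ (u 0)) hu hs h0) hu_cont.snd.fst hw hw0
      (fun r hr => ?_) hs h0
    rw [smul_eq_mul, h.mul_derivWithin_p r hr, sq]
    rfl
  · refine .of_id_smul_derivWithin_eq_mul ((h.contDiffOn_inv_machSq hγ 0 h0).of_le hle)
      (.comp (hrate m) hu hs h0) ((hrate (m + 1)).comp_contDiffWithinAt 0 hu_cont) hw hw0
      (fun r hr => ?_) hs h0
    rw [smul_eq_mul, h.mul_derivWithin_inv_machSq r hr]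
    simp only [Function.comp_apply, Pi.mul_apply]
    ring

theorem hasEvenJet (h : IsUpstreamFlow n γ r₀ u w) (hγ : 1 < γ) (hr₀ : 0 < r₀) :
    HasEvenJet n u (Icc 0 r₀) 0 := by
  suffices ∀ m ≤ n, HasEvenJet m u (Icc 0 r₀) 0 from this n le_rfl
  intro m hm
  induction m with
  | zero =>
    exact .zero ((h.contDiffOn 0 (left_mem_Icc.mpr hr₀.le)).of_le (mod_cast (n + 1).zero_le))
  | succ m ih => exact h.hasEvenJet_succ hγ hr₀ hm (ih (Nat.le_of_succ_le hm))

theorem exists_antitoneOn_inv_machSq (h : IsUpstreamFlow n γ r₀ u w) (hγ : 1 < γ) (hr₀ : 0 < r₀)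
    (hM : 1 / machSq γ (u 0) = 2 * γ / (γ - 1)) :
    ∃ c > 0, AntitoneOn (fun r => 1 / machSq γ (u r)) (Ico 0 c) := by
  have h0 := left_mem_Icc.mpr hr₀.le
  have hforcing : ∀ᶠ r in 𝓝[Icc 0 r₀] 0, machForcing γ (u r) < 0 :=
    (((h.isPhysical 0 h0).contDiffAt_machForcing (n := 0) hγ).continuousAt.comp_continuousWithinAt
      (h.contDiffOn.continuousOn 0 h0)).eventually
      (gt_mem_nhds (machForcing_neg_of_inv_machSq_eq hγ hM))
  refine exists_antitoneOn_Ico_of_derivWithin_nonpos hr₀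
    ((h.contDiffOn_inv_machSq hγ).differentiableOn (by simp)) ?_
  filter_upwards [nhdsWithin_le_of_mem (Icc_mem_nhdsGT hr₀) hforcing, Ioo_mem_nhdsGT hr₀]
    with r hneg hr
  refine nonpos_of_mul_nonpos_right ?_ hr.1
  rw [h.mul_derivWithin_inv_machSq r (Ioo_subset_Icc_self hr)]
  have hcoeff : 0 ≤ (γ - 1) * w r ^ 2 / (4 * (u r).q ^ 2) :=
    div_nonneg (mul_nonneg (sub_nonneg.mpr hγ.le) (sq_nonneg _)) (by positivity)
  exact mul_nonpos_of_nonneg_of_nonpos hcoeff hneg.le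

theorem postShockPressure_eventually_eq_zero_or_pos (h : IsUpstreamFlow n γ r₀ u w) (hγ : 1 < γ)
    (hr₀ : 0 < r₀) (hp : postShockPressure γ (u 0) = 0) :
    (∀ᶠ r in 𝓝[Icc 0 r₀] 0, postShockPressure γ (u r) = 0) ∨
      ∀ᶠ r in 𝓝[>] 0, 0 < postShockPressure γ (u r) := by
  have hfactor_pos : ∀ r ∈ Icc 0 r₀, 0 < muSq γ * machSq γ (u r) * (u r).p := fun r hr =>
    have hu := h.isPhysical r hr
    mul_pos (mul_pos (muSq_pos hγ) (hu.machSq_pos (zero_lt_one.trans hγ))) hu.p_pos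
  have h0 := left_mem_Icc.mpr hr₀.le
  have hM : 1 / machSq γ (u 0) = 2 * γ / (γ - 1) := by
    rw [(h.isPhysical 0 h0).postShockPressure_eq_mul_sub_inv_machSq hγ] at hp
    linarith [(mul_eq_zero.mp hp).resolve_left (hfactor_pos 0 h0).ne']
  obtain ⟨c, hc, hanti⟩ := h.exists_antitoneOn_inv_machSq hγ hr₀ hM
  refine (eventuallyEq_or_eventually_lt_of_antitoneOn hc hanti).imp (fun heq => ?_) fun hlt => ?_
  · filter_upwards [nhdsWithin_mono 0 Icc_subset_Ici_self heq, self_mem_nhdsWithin] with r hr hr_mem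
    rw [(h.isPhysical r hr_mem).postShockPressure_eq_mul_sub_inv_machSq hγ, hr, hM, sub_self,
      mul_zero]
  · filter_upwards [hlt, Ioo_mem_nhdsGT hr₀] with r hr hr_mem
    have hr_mem' := Ioo_subset_Icc_self hr_mem
    rw [(h.isPhysical r hr_mem').postShockPressure_eq_mul_sub_inv_machSq hγ]
    exact mul_pos (hfactor_pos r hr_mem') (sub_pos.mpr (hM ▸ hr))

theorem iteratedDerivWithin_comp_postShock_eq_zero (h : IsUpstreamFlow n γ r₀ u w) (hγ : 1 < γ)
    (hr₀ : 0 < r₀) {Ψ : GasState → ℝ}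
    (hΨ : ∀ v : GasState, v.p ≠ 0 → 0 < v.ρ → ContDiffAt ℝ n Ψ v)
    (hΨ_zero : ∀ v : GasState, v.p = 0 → Ψ v = 0)
    (hΨ_blowup : ∀ v : GasState, v.p = 0 → 0 < v.ρ → 0 < v.q →
      Tendsto (fun x => ‖Ψ x‖) (𝓝[{x | 0 < x.p}] v) atTop)
    {k : ℕ} (hk : k ≤ n) (hodd : Odd k) :
    iteratedDerivWithin k (fun r => Ψ (postShock γ (u r))) (Icc 0 r₀) 0 = 0 := by
  have hs := uniqueDiffOn_Icc hr₀
  have h0 := left_mem_Icc.mpr hr₀.le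
  have hu := h.isPhysical 0 h0
  have hρ := hu.postShock_ρ_pos hγ
  rcases ne_or_eq (postShock γ (u 0)).p 0 with hp | hp
  · have hcomp := (hΨ _ hp hρ).comp (u 0) (hu.contDiffAt_postShock hγ)
    exact (((h.hasEvenJet hγ hr₀).comp hcomp hs h0).2 k hk hodd :)
  rcases h.postShockPressure_eventually_eq_zero_or_pos hγ hr₀ hp with hzero | hpos
  · have heq : (fun r => Ψ (postShock γ (u r))) =ᶠ[𝓝[Icc 0 r₀] 0] fun _ => 0 :=
      hzero.mono fun r hr => hΨ_zero _ hr
    rw [heq.iteratedDerivWithin_eq (hΨ_zero _ hp), iteratedDerivWithin_const, ite_self]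
  · obtain ⟨k, rfl⟩ := Nat.exists_eq_succ_of_ne_zero hodd.pos.ne'
    refine iteratedDerivWithin_succ_eq_zero_of_tendsto_norm_atTop hr₀ ?_ ?_
    · filter_upwards [hpos, Ioo_mem_nhdsGT hr₀] with r hr hr_mem
      have hr_mem' := Ioo_subset_Icc_self hr_mem
      have hur := h.isPhysical r hr_mem'
      have hcomp := (hΨ _ hr.ne' (hur.postShock_ρ_pos hγ)).comp (u r) (hur.contDiffAt_postShock hγ)
      exact (hcomp.of_le (mod_cast Nat.le_of_succ_le hk)).comp r
        ((h.contDiffOn.contDiffAt (Icc_mem_nhds hr_mem.1 hr_mem.2)).of_le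
          (mod_cast Nat.le_of_succ_le (hk.trans n.le_succ)))
    · have hcont : ContinuousWithinAt (fun r => postShock γ (u r)) (Icc 0 r₀) 0 :=
        (hu.contDiffAt_postShock (n := 0) hγ).continuousAt.comp_continuousWithinAt
          (h.contDiffOn.continuousOn 0 h0)
      exact (hΨ_blowup _ hp hρ (hu.postShockSpeed_pos hγ)).comp
        (tendsto_nhdsWithin_iff.mpr
          ⟨hcont.tendsto.mono_left (nhdsWithin_le_of_mem (Icc_mem_nhdsGT hr₀)), hpos⟩)

end IsUpstreamFlow

theorem stmt_7_general {n : ℕ} {γ A cv r₀ : ℝ} {u : ℝ → GasState} {w : ℝ → ℝ}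
    (h : IsUpstreamFlow n γ r₀ u w) (hγ : 1 < γ) (hA : 0 < A) (hcv : 0 < cv) (hr₀ : 0 < r₀)
    {k : ℕ} (hk : k ≤ n) (hodd : Odd k) :
    iteratedDerivWithin k (fun r => (u r).p) (Icc 0 r₀) 0 = 0 ∧
    iteratedDerivWithin k (fun r => (postShock γ (u r)).p) (Icc 0 r₀) 0 = 0 ∧
    iteratedDerivWithin k (fun r => (u r).ρ) (Icc 0 r₀) 0 = 0 ∧
    iteratedDerivWithin k (fun r => (postShock γ (u r)).ρ) (Icc 0 r₀) 0 = 0 ∧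
    iteratedDerivWithin k (fun r => entropy γ A cv (u r)) (Icc 0 r₀) 0 = 0 ∧
    iteratedDerivWithin k (fun r => entropy γ A cv (postShock γ (u r))) (Icc 0 r₀) 0 = 0 ∧
    iteratedDerivWithin k (fun r => machSq γ (u r)) (Icc 0 r₀) 0 = 0 ∧
    iteratedDerivWithin k (fun r => machSq γ (postShock γ (u r))) (Icc 0 r₀) 0 = 0 ∧
    iteratedDerivWithin k (fun r => (postShock γ (u r)).q) (Icc 0 r₀) 0 = 0 := by
  have h0 := left_mem_Icc.mpr hr₀.le
  have hu := h.isPhysical 0 h0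
  have hγ₀ := zero_lt_one.trans hγ
  have odd_eq_zero {φ : GasState → ℝ} (hφ : ContDiffAt ℝ n φ (u 0)) :
      iteratedDerivWithin k (φ ∘ u) (Icc 0 r₀) 0 = 0 :=
    ((h.hasEvenJet hγ hr₀).comp hφ (uniqueDiffOn_Icc hr₀) h0).2 k hk hodd
  have hshock : ContDiffAt ℝ n (postShock γ) (u 0) := hu.contDiffAt_postShock hγ
  refine ⟨odd_eq_zero contDiffAt_fst, odd_eq_zero hshock.fst, odd_eq_zero contDiffAt_snd.fst,
    odd_eq_zero hshock.snd.fst, odd_eq_zero (contDiffAt_entropy hA.ne' hu.p_pos.ne' hu.ρ_pos),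
    ?_, odd_eq_zero (contDiffAt_machSq hγ₀.ne' hu.p_pos.ne'), ?_, odd_eq_zero hshock.snd.snd⟩
  · exact h.iteratedDerivWithin_comp_postShock_eq_zero hγ hr₀
      (fun v hp hρ => contDiffAt_entropy hA.ne' hp hρ) (fun v hp => by simp [entropy, hp])
      (fun v hp hρ _ => tendsto_abs_atBot_atTop.comp (tendsto_entropy_atBot hA hcv hp hρ)) hk hodd
  · exact h.iteratedDerivWithin_comp_postShock_eq_zero hγ hr₀
      (fun v hp _ => contDiffAt_machSq hγ₀.ne' hp) (fun v hp => by simp [machSq, hp])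
      (fun v hp hρ hq => tendsto_norm_atTop_atTop.comp (tendsto_machSq_atTop hγ₀ hp hρ hq)) hk hodd

end UpstreamFlow

/-- Second part of Lemma 3.1 (case j = 3): the one-sided third radial
derivatives of `p₋, p₊, ρ₋, ρ₊, s₋, s₊, M₋², M₊², q₊` vanish at `r = 0`. -/
theorem stmt_7 (γ μ2 A cv r₀ : ℝ) (hγ : 1 < γ) (hμ2 : μ2 = (γ - 1) / (γ + 1))
    (hA : 0 < A) (hcv : 0 < cv) (hr₀ : 0 < r₀)
    (pm ρm qm wm c2m M2m pp qp ρp wp M2p sm sp : ℝ → ℝ)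
    (hpm : ContDiffOn ℝ 4 pm (Set.Icc 0 r₀))
    (hρm : ContDiffOn ℝ 4 ρm (Set.Icc 0 r₀))
    (hqm : ContDiffOn ℝ 4 qm (Set.Icc 0 r₀))
    (hwm : ContDiffOn ℝ 4 wm (Set.Icc 0 r₀))
    (hpm_pos : ∀ r ∈ Set.Icc (0:ℝ) r₀, 0 < pm r)
    (hρm_pos : ∀ r ∈ Set.Icc (0:ℝ) r₀, 0 < ρm r)
    (hqm_pos : ∀ r ∈ Set.Icc (0:ℝ) r₀, 0 < qm r)
    (hc2m : ∀ r, c2m r = γ * pm r / ρm r)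
    (hM2m : ∀ r, M2m r = ρm r * (qm r) ^ 2 / (γ * pm r))
    (hpp : ∀ r, pp r = ((1 + μ2) * M2m r - μ2) * pm r)
    (hqp : ∀ r, qp r = μ2 * (qm r + (2 / (γ - 1)) * c2m r / qm r))
    (hρp : ∀ r, ρp r = ρm r * qm r / qp r)
    (hwp : ∀ r, wp r = wm r)
    (hM2p : ∀ r, M2p r = ρp r * (qp r) ^ 2 / (γ * pp r))
    (hsm : ∀ r, sm r = cv * Real.log (pm r / (A * ρm r ^ γ)))
    (hsp : ∀ r, sp r = cv * Real.log (pp r / (A * ρp r ^ γ)))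
    (h1 : ∀ r ∈ Set.Icc (0:ℝ) r₀,
      r * derivWithin pm (Set.Icc 0 r₀) r = ρm r * (wm r) ^ 2)
    (h2 : ∀ r ∈ Set.Icc (0:ℝ) r₀,
      r * derivWithin (fun s => 1 / M2m s) (Set.Icc 0 r₀) r =
        ((γ - 1) * (wm r) ^ 2 / (4 * (qm r) ^ 2)) *
          ((γ + 1) ^ 2 / (γ - 1 + 2 / M2m r) - (γ - 1 + 2 / M2m r)))
    (h3 : wm 0 = 0) (h3' : wm r₀ = 0)
    (h3'' : iteratedDerivWithin 2 wm (Set.Icc 0 r₀) 0 = 0)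
    (h4 : derivWithin qm (Set.Icc 0 r₀) 0 = 0)
    (h4' : derivWithin qm (Set.Icc 0 r₀) r₀ = 0)
    (h4'' : iteratedDerivWithin 3 qm (Set.Icc 0 r₀) 0 = 0) :
    iteratedDerivWithin 3 pm (Set.Icc 0 r₀) 0 = 0 ∧
    iteratedDerivWithin 3 pp (Set.Icc 0 r₀) 0 = 0 ∧
    iteratedDerivWithin 3 ρm (Set.Icc 0 r₀) 0 = 0 ∧
    iteratedDerivWithin 3 ρp (Set.Icc 0 r₀) 0 = 0 ∧
    iteratedDerivWithin 3 sm (Set.Icc 0 r₀) 0 = 0 ∧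
    iteratedDerivWithin 3 sp (Set.Icc 0 r₀) 0 = 0 ∧
    iteratedDerivWithin 3 M2m (Set.Icc 0 r₀) 0 = 0 ∧
    iteratedDerivWithin 3 M2p (Set.Icc 0 r₀) 0 = 0 ∧
    iteratedDerivWithin 3 qp (Set.Icc 0 r₀) 0 = 0 := by
  simp only [← funext_iff] at hc2m hM2m hpp hqp hρp hM2p hsm hsp
  subst hμ2 hc2m hM2m hpp hqp hρp hM2p hsm hsp
  have hflow : IsUpstreamFlow 3 γ r₀ (fun r => (pm r, ρm r, qm r)) wm :=
    { contDiffOn := hpm.prodMk (hρm.prodMk hqm)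
      contDiffOn_swirl := hwm
      isPhysical := fun r hr => ⟨hpm_pos r hr, hρm_pos r hr, hqm_pos r hr⟩
      mul_derivWithin_p := h1
      mul_derivWithin_inv_machSq := h2
      iteratedDerivWithin_q := fun k hk hodd => by
        interval_cases k <;> first | exact absurd hodd (by decide) | simpa
      iteratedDerivWithin_swirl := fun k hk heven => by
        interval_cases k <;> first | exact absurd heven (by decide) | simpa }
  exact stmt_7_general hflow hγ hA hcv hr₀ le_rfl (by decide)
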